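/- arXiv:2401.10089 — 3 statements merged into one kernel-verified Lean document; each statement's English description precedes it below -/
import Mathlib

section
/- Fix an integer k ≥ 1. The set of polynomials z ∈ ℂ[X] obtainable as outputs of degree-optimal evaluation schemes with k multiplications is unchanged if the coefficients of the first multiplication are restricted to satisfy h_{1,1} = g_{1,1} = 0 and h_{1,2} = g_{1,2} = 1 (i.e., to P_3 = X²): every polynomial obtainable by some scheme is obtainable by a scheme satisfying this restriction, and conversely. -/
open Polynomial

/-- The intermediate polynomials `P` of a degree-optimal evaluation scheme with `k`
multiplications and coefficients `h g`: `P 1 = 1`, `P 2 = X`, and for `1 ≤ j ≤ k`,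
`P (j+2) = (∑_{i=1}^{j+1} h j i • P i) * (∑_{i=1}^{j+1} g j i • P i)`. -/
def SchemeP (k : ℕ) (h g : ℕ → ℕ → ℂ) (P : ℕ → Polynomial ℂ) : Prop :=
  P 1 = 1 ∧ P 2 = Polynomial.X ∧
    ∀ j, 1 ≤ j → j ≤ k →
      P (j + 2) =
        (∑ i ∈ Finset.Icc 1 (j + 1), Polynomial.C (h j i) * P i) *
        (∑ i ∈ Finset.Icc 1 (j + 1), Polynomial.C (g j i) * P i)

/-- The output polynomial `z = ∑_{i=1}^{k+2} y i • P i` of a degree-optimal evaluation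
scheme with `k` multiplications. -/
noncomputable def SchemeOutput (k : ℕ) (y : ℕ → ℂ) (P : ℕ → Polynomial ℂ) : Polynomial ℂ :=
  ∑ i ∈ Finset.Icc 1 (k + 2), Polynomial.C (y i) * P i

/-- Transformed coefficients after replacing `P 3 = α + β X + γ X²` by `X²`. -/
def transCoeff (α β γ : ℂ) (c : ℕ → ℂ) (i : ℕ) : ℂ :=
  if i = 1 then c 1 + c 3 * α else if i = 2 then c 2 + c 3 * β
  else if i = 3 then c 3 * γ else c i

lemma sum_transCoeff (α β γ : ℂ) (c : ℕ → ℂ) (P : ℕ → Polynomial ℂ)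
    (h1 : P 1 = 1) (h2 : P 2 = Polynomial.X)
    (h3 : P 3 = Polynomial.C α + Polynomial.C β * Polynomial.X
      + Polynomial.C γ * Polynomial.X ^ 2) (n : ℕ) (hn : 3 ≤ n) :
    ∑ i ∈ Finset.Icc 1 n, Polynomial.C (c i) * P i =
    ∑ i ∈ Finset.Icc 1 n, Polynomial.C (transCoeff α β γ c i) *
      (Function.update P 3 (Polynomial.X ^ 2)) i := by
  induction n, hn using Nat.le_induction with
  | base =>
    simp [Finset.sum_Icc_succ_top, transCoeff, h1, h2, h3, Function.update]
    ring
  | succ n hn ih =>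
    rw [Finset.sum_Icc_succ_top (by omega), Finset.sum_Icc_succ_top (by omega), ih]
    have e1 : n ≠ 0 := by omega
    have e2 : n ≠ 1 := by omega
    have e3 : n ≠ 2 := by omega
    simp [transCoeff, Function.update, e1, e2, e3]

/-- The set of polynomials obtainable by degree-optimal evaluation schemes with `k`
multiplications is unchanged under the restriction
`h 1 1 = g 1 1 = 0`, `h 1 2 = g 1 2 = 1` (i.e. `P 3 = X ^ 2`). -/
theorem restricted_schemes_give_same_polynomials (k : ℕ) (hk : 1 ≤ k) :
    {z : Polynomial ℂ | ∃ (h g : ℕ → ℕ → ℂ) (y : ℕ → ℂ) (P : ℕ → Polynomial ℂ),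
        SchemeP k h g P ∧ z = SchemeOutput k y P} =
    {z : Polynomial ℂ | ∃ (h g : ℕ → ℕ → ℂ) (y : ℕ → ℂ) (P : ℕ → Polynomial ℂ),
        SchemeP k h g P ∧ h 1 1 = 0 ∧ g 1 1 = 0 ∧ h 1 2 = 1 ∧ g 1 2 = 1 ∧
        z = SchemeOutput k y P} := by
  ext z
  constructor
  · rintro ⟨h, g, y, P, ⟨h1, h2, hP⟩, rfl⟩
    have h3 : P 3 = Polynomial.C (h 1 1 * g 1 1)
        + Polynomial.C (h 1 1 * g 1 2 + h 1 2 * g 1 1) * Polynomial.X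
        + Polynomial.C (h 1 2 * g 1 2) * Polynomial.X ^ 2 := by
      have := hP 1 le_rfl hk
      simp [Finset.sum_Icc_succ_top, h1, h2] at this
      rw [this]
      simp
      ring
    have key := fun c => sum_transCoeff _ _ _ c P h1 h2 h3
    generalize h 1 1 * g 1 1 = α at key
    generalize h 1 1 * g 1 2 + h 1 2 * g 1 1 = β at key
    generalize h 1 2 * g 1 2 = γ at key
    refine ⟨fun j i => if j = 1 then (if i = 2 then 1 else 0) else transCoeff α β γ (h j) i,
      fun j i => if j = 1 then (if i = 2 then 1 else 0) else transCoeff α β γ (g j) i,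
      transCoeff α β γ y, Function.update P 3 (Polynomial.X ^ 2), ⟨?_, ?_, ?_⟩,
      by simp, by simp, by simp, by simp, key y (k + 2) (by omega)⟩
    · simpa [Function.update] using h1
    · simpa [Function.update] using h2
    · intro j hj hjk
      by_cases hj1 : j = 1
      · subst hj1
        simp [Finset.sum_Icc_succ_top, h2, Function.update]
        ring
      · simp only [hj1, if_false]
        rw [← key (h j) (j + 1) (by omega), ← key (g j) (j + 1) (by omega), ← hP j hj hjk,
          Function.update_of_ne (by omega)]
  · rintro ⟨h, g, y, P, hP, -, -, -, -, hz⟩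
    exact ⟨h, g, y, P, hP, hz⟩
end

section
/- Fix an integer k ≥ 1 and a degree-optimal evaluation scheme with k multiplications whose coefficients satisfy h_{1,2} = g_{1,2} = 1, so that P_3 = (h_{1,1} + X)(g_{1,1} + X) = α + βX + X² with α = h_{1,1} g_{1,1} and β = h_{1,1} + g_{1,1}. Define a new scheme with h̃_{1,1} = g̃_{1,1} = 0, h̃_{1,2} = g̃_{1,2} = 1 (so P̃_3 = X²), and for each j ≥ 2 set h̃_{j,1} = h_{j,1} + α h_{j,3}, g̃_{j,1} = g_{j,1} + α g_{j,3}, h̃_{j,2} = h_{j,2} + β h_{j,3}, g̃_{j,2} = g_{j,2} + β g_{j,3}, keeping all other h, g coefficients unchanged, and set ỹ_1 = y_1 + α y_3, ỹ_2 = y_2 + β y_3, ỹ_i = y_i otherwise. Then P̃_j = P_j for all 4 ≤ j ≤ k+2 and the output polynomials coincide: z̃ = z. -/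
open Polynomial

/-- Coefficient shift absorbing `a + b X` into the first two coefficients. -/
noncomputable def shiftCoeff (a b : ℂ) (y : ℕ → ℂ) (i : ℕ) : ℂ :=
  if i = 1 then y 1 + a * y 3 else if i = 2 then y 2 + b * y 3 else y i

/-- Replace the third polynomial by `X ^ 2`. -/
noncomputable def replaceThird (P : ℕ → Polynomial ℂ) (i : ℕ) : Polynomial ℂ :=
  if i = 3 then Polynomial.X ^ 2 else P i

theorem shift_sum (a b : ℂ) (y : ℕ → ℂ) (P : ℕ → Polynomial ℂ) (h1 : P 1 = 1)
    (h2 : P 2 = Polynomial.X)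
    (h3 : P 3 = Polynomial.C a + Polynomial.C b * Polynomial.X + Polynomial.X ^ 2)
    (n : ℕ) (hn : 3 ≤ n) :
    ∑ i ∈ Finset.Icc 1 n, Polynomial.C (shiftCoeff a b y i) * replaceThird P i =
      ∑ i ∈ Finset.Icc 1 n, Polynomial.C (y i) * P i := by
  induction n, hn using Nat.le_induction with
  | base =>
    simp [Finset.sum_Icc_succ_top, shiftCoeff, replaceThird, h1, h2, h3]
    ring
  | succ n hn ih =>
    rw [Finset.sum_Icc_succ_top (by omega), Finset.sum_Icc_succ_top (by omega), ih]
    have e1 : n + 1 ≠ 1 := by omega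
    have e2 : n + 1 ≠ 2 := by omega
    have e3 : n + 1 ≠ 3 := by omega
    simp only [shiftCoeff, replaceThird, if_neg e1, if_neg e2, if_neg e3]

/-- Eliminating the constant coefficients of the first multiplication:
given a scheme with `h 1 2 = g 1 2 = 1` (so `P 3 = α + β • X + X ^ 2` with
`α = h 1 1 * g 1 1`, `β = h 1 1 + g 1 1`), the modified scheme with
`h̃ 1 1 = g̃ 1 1 = 0`, `h̃ 1 2 = g̃ 1 2 = 1` (so `P̃ 3 = X ^ 2`),
`h̃ j 1 = h j 1 + α * h j 3`, `h̃ j 2 = h j 2 + β * h j 3` (likewise for `g`) for `j ≥ 2`,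
`ỹ 1 = y 1 + α * y 3`, `ỹ 2 = y 2 + β * y 3`, all other coefficients unchanged,
satisfies `P̃ j = P j` for `4 ≤ j ≤ k + 2` and has the same output polynomial. -/
theorem scheme_first_row_shift (k : ℕ) (hk : 1 ≤ k) (h g : ℕ → ℕ → ℂ) (y : ℕ → ℂ)
    (P : ℕ → Polynomial ℂ) (hP : SchemeP k h g P)
    (h12 : h 1 2 = 1) (g12 : g 1 2 = 1) :
    ∃ (h' g' : ℕ → ℕ → ℂ) (y' : ℕ → ℂ) (P' : ℕ → Polynomial ℂ),
      SchemeP k h' g' P' ∧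
      h' 1 1 = 0 ∧ g' 1 1 = 0 ∧ h' 1 2 = 1 ∧ g' 1 2 = 1 ∧
      P' 3 = Polynomial.X ^ 2 ∧
      (∀ j, 2 ≤ j →
        h' j 1 = h j 1 + h 1 1 * g 1 1 * h j 3 ∧
        g' j 1 = g j 1 + h 1 1 * g 1 1 * g j 3 ∧
        h' j 2 = h j 2 + (h 1 1 + g 1 1) * h j 3 ∧
        g' j 2 = g j 2 + (h 1 1 + g 1 1) * g j 3) ∧
      (∀ j i, 2 ≤ j → 3 ≤ i → h' j i = h j i ∧ g' j i = g j i) ∧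
      y' 1 = y 1 + h 1 1 * g 1 1 * y 3 ∧
      y' 2 = y 2 + (h 1 1 + g 1 1) * y 3 ∧
      (∀ i, 3 ≤ i → y' i = y i) ∧
      (∀ j, 4 ≤ j → j ≤ k + 2 → P' j = P j) ∧
      SchemeOutput k y' P' = SchemeOutput k y P := by
  obtain ⟨h1, h2, hrec⟩ := hP
  have h3 : P 3 = Polynomial.C (h 1 1 * g 1 1) + Polynomial.C (h 1 1 + g 1 1) * Polynomial.X
      + Polynomial.X ^ 2 := by
    have := hrec 1 le_rfl hk
    norm_num [Finset.sum_Icc_succ_top, h1, h2, h12, g12] at this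
    rw [this]
    simp only [map_add, map_mul]
    ring
  have key := fun y n hn => shift_sum (h 1 1 * g 1 1) (h 1 1 + g 1 1) y P h1 h2 h3 n hn
  refine ⟨fun j => if j = 1 then (fun i => if i = 1 then 0 else 1) else
      shiftCoeff (h 1 1 * g 1 1) (h 1 1 + g 1 1) (h j),
    fun j => if j = 1 then (fun i => if i = 1 then 0 else 1) else
      shiftCoeff (h 1 1 * g 1 1) (h 1 1 + g 1 1) (g j),
    shiftCoeff (h 1 1 * g 1 1) (h 1 1 + g 1 1) y, replaceThird P,
    ⟨by simp [replaceThird, h1], by simp [replaceThird, h2], ?_⟩,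
    by simp, by simp, by simp, by simp, by simp [replaceThird], ?_, ?_,
    by simp [shiftCoeff], by simp [shiftCoeff], ?_, ?_, key y _ (by omega)⟩
  · intro j hj hjk
    by_cases hj1 : j = 1
    · subst hj1
      simp [Finset.sum_Icc_succ_top, replaceThird, h1, h2]
      ring
    · simp only [if_neg hj1]
      rw [key _ _ (by omega), key _ _ (by omega), ← hrec j hj hjk]
      have e : j + 2 ≠ 3 := by omega
      simp only [replaceThird, if_neg e]
  · intro j hj
    have e : j ≠ 1 := by omega
    simp [e, shiftCoeff]
  · intro j i hj hi
    have e : j ≠ 1 := by omega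
    have e1 : i ≠ 1 := by omega
    have e2 : i ≠ 2 := by omega
    simp [e, e1, e2, shiftCoeff]
  · intro i hi
    have e1 : i ≠ 1 := by omega
    have e2 : i ≠ 2 := by omega
    simp [e1, e2, shiftCoeff]
  · intro j hj _
    have e : j ≠ 3 := by omega
    simp [e, replaceThird]
end

section
/- Fix an integer k ≥ 2 and a degree-optimal evaluation scheme with k multiplications whose first multiplication is degenerate, i.e., h_{1,2} = 0 or g_{1,2} = 0. Then P_3 is a polynomial of degree at most 1 (a linear combination of P_1 = 1 and P_2 = X), and consequently the output polynomial z of the scheme is also the output of some degree-optimal evaluation scheme with only k − 1 multiplications. -/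
open Polynomial

/-- Coefficients after eliminating `P 3 = a + b X`. -/
def elimCoeff (a b : ℂ) (c : ℕ → ℂ) (i : ℕ) : ℂ :=
  if i = 1 then c 1 + c 3 * a else if i = 2 then c 2 + c 3 * b else c (i + 1)

/-- The polynomials after eliminating `P 3`. -/
noncomputable def elimP (P : ℕ → Polynomial ℂ) (i : ℕ) : Polynomial ℂ :=
  if i = 1 then 1 else if i = 2 then Polynomial.X else P (i + 1)

lemma elim_sum (a b : ℂ) (c : ℕ → ℂ) (P : ℕ → Polynomial ℂ) (h1 : P 1 = 1)
    (h2 : P 2 = Polynomial.X) (h3 : P 3 = Polynomial.C a + Polynomial.C b * Polynomial.X)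
    (n : ℕ) (hn : 2 ≤ n) :
    ∑ i ∈ Finset.Icc 1 n, Polynomial.C (elimCoeff a b c i) * elimP P i =
      ∑ i ∈ Finset.Icc 1 (n + 1), Polynomial.C (c i) * P i := by
  induction n, hn using Nat.le_induction with
  | base =>
    simp [Finset.sum_Icc_succ_top, elimCoeff, elimP, h1, h2, h3]
    ring
  | succ n hn ih =>
    rw [Finset.sum_Icc_succ_top (by omega), ih, Finset.sum_Icc_succ_top (b := n + 1) (by omega)]
    have e1 : n + 1 ≠ 1 := by omega
    have e2 : n + 1 ≠ 2 := by omega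
    simp only [elimCoeff, elimP, if_neg e1, if_neg e2]

lemma exists_linear (k : ℕ) (hk : 2 ≤ k) (h g : ℕ → ℕ → ℂ)
    (P : ℕ → Polynomial ℂ) (hP : SchemeP k h g P) (hdeg : h 1 2 = 0 ∨ g 1 2 = 0) :
    ∃ a b : ℂ, P 3 = Polynomial.C a + Polynomial.C b * Polynomial.X := by
  obtain ⟨h1, h2, hs⟩ := hP
  have h3 := hs 1 le_rfl (by omega)
  simp only [Finset.sum_Icc_succ_top (show 1 ≤ 1 + 1 by omega), Finset.Icc_self,
    Finset.sum_singleton, Nat.reduceAdd, h1, h2] at h3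
  rcases hdeg with e | e
  · refine ⟨h 1 1 * g 1 1, h 1 1 * g 1 2, ?_⟩
    rw [h3, e]
    simp only [map_mul, map_zero]
    ring
  · refine ⟨h 1 1 * g 1 1, h 1 2 * g 1 1, ?_⟩
    rw [h3, e]
    simp only [map_mul, map_zero]
    ring

/-- If the first multiplication of a degree-optimal evaluation scheme with `k ≥ 2`
multiplications is degenerate (`h 1 2 = 0` or `g 1 2 = 0`), then `P 3` has degree at
most `1`, and the output polynomial is also the output of some degree-optimal
evaluation scheme with `k - 1` multiplications. -/
theorem degenerate_first_multiplication (k : ℕ) (hk : 2 ≤ k) (h g : ℕ → ℕ → ℂ)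
    (y : ℕ → ℂ) (P : ℕ → Polynomial ℂ) (hP : SchemeP k h g P)
    (hdeg : h 1 2 = 0 ∨ g 1 2 = 0) :
    (P 3).degree ≤ 1 ∧
    ∃ (h' g' : ℕ → ℕ → ℂ) (y' : ℕ → ℂ) (P' : ℕ → Polynomial ℂ),
      SchemeP (k - 1) h' g' P' ∧
      SchemeOutput (k - 1) y' P' = SchemeOutput k y P := by
  obtain ⟨a, b, h3⟩ := exists_linear k hk h g P hP hdeg
  obtain ⟨h1, h2, hs⟩ := hP
  refine ⟨?_, fun j => elimCoeff a b (h (j + 1)), fun j => elimCoeff a b (g (j + 1)),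
    elimCoeff a b y, elimP P, ⟨?_, ?_, ?_⟩, ?_⟩
  · rw [h3, add_comm]
    exact Polynomial.degree_linear_le
  · simp [elimP]
  · simp [elimP]
  · intro j hj hjk
    rw [elim_sum a b _ P h1 h2 h3 _ (by omega), elim_sum a b _ P h1 h2 h3 _ (by omega),
      ← hs (j + 1) (by omega) (by omega)]
    have e1 : j + 2 ≠ 1 := by omega
    have e2 : j + 2 ≠ 2 := by omega
    simp only [elimP, if_neg e1, if_neg e2]
  · unfold SchemeOutput
    rw [elim_sum a b _ P h1 h2 h3 _ (by omega), show k - 1 + 2 + 1 = k + 2 by omega]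
end
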